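/- arXiv:1607.03393 — 2 statements merged into one kernel-verified Lean document; each statement's English description precedes it below -/
import Mathlib

section
/- Let G and A be groups, π : G → Aut(A) a group homomorphism, and b : G → A a bijective 1-cocycle with respect to π. Define α_g(h) := b⁻¹(π(g)(b(h))) and β_h(g) := α_g(h)⁻¹ g h for g, h ∈ G. Then g h = α_g(h) β_h(g) for all g, h ∈ G, and the map R(g,h) := (α_g(h), β_h(g)) is a non-degenerate YBE solution on the underlying set of the group G. -/
/-- The map acting as `R` on the first two coordinates of `X × X × X` (i.e. `R × id_X`). -/
def Rfst {X : Type*} (R : X × X → X × X) : X × X × X → X × X × X :=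
  fun p => ((R (p.1, p.2.1)).1, (R (p.1, p.2.1)).2, p.2.2)

/-- The map acting as `R` on the last two coordinates of `X × X × X` (i.e. `id_X × R`). -/
def Rsnd {X : Type*} (R : X × X → X × X) : X × X × X → X × X × X :=
  fun p => (p.1, R p.2)

/-- The braid relation `(R × id) ∘ (id × R) ∘ (R × id) = (id × R) ∘ (R × id) ∘ (id × R)`. -/
def IsBraided {X : Type*} (R : X × X → X × X) : Prop :=
  Rfst R ∘ Rsnd R ∘ Rfst R = Rsnd R ∘ Rfst R ∘ Rsnd R

/-- The map `R(x, y) = (α_x(y), β_y(x))`. -/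
def YBEform {X : Type*} (α β : X → X → X) : X × X → X × X :=
  fun p => (α p.1 p.2, β p.2 p.1)

/-!
Transporting the action `π` along `b` gives a left action `α` of `G` on its underlying set, and the
cocycle identity says exactly that `α_g(h k) = α_g(h) α_{β_h(g)}(k)`, i.e. that `β` is a right
action. The first and third coordinates of the braid relation follow from the two action laws
together with `α_g(h) β_h(g) = g h`, and the middle one by cancellation, since both sides have the
same product of coordinates. Moreover `R(g, h) = (u, v)` implies
`R(v⁻¹, u⁻¹) = (h⁻¹, g⁻¹)`, so `R` is invertible.
-/

/-- The involution `(x, y) ↦ (y⁻¹, x⁻¹)` of `G × G`; it conjugates the solution attached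
to a pair of compatible actions to its inverse. -/
def swapInv {G : Type*} [Group G] (p : G × G) : G × G :=
  (p.2⁻¹, p.1⁻¹)

theorem swapInv_involutive {G : Type*} [Group G] :
    Function.Involutive (swapInv : G × G → G × G) :=
  fun p => by simp only [swapInv, inv_inv]

/-- The product of the three coordinates, an invariant of `R × id` and `id × R` whenever `R`
preserves products. -/
def tripleProd {M : Type*} [Mul M] (p : M × M × M) : M :=
  p.1 * p.2.1 * p.2.2

section TripleProd

variable {M : Type*}

theorem tripleProd_Rfst [Mul M] {R : M × M → M × M} (hR : ∀ p, (R p).1 * (R p).2 = p.1 * p.2)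
    (p : M × M × M) : tripleProd (Rfst R p) = tripleProd p := by
  simp only [tripleProd, Rfst, hR]

theorem tripleProd_Rsnd [Semigroup M] {R : M × M → M × M}
    (hR : ∀ p, (R p).1 * (R p).2 = p.1 * p.2) (p : M × M × M) :
    tripleProd (Rsnd R p) = tripleProd p := by
  simp only [tripleProd, Rsnd, mul_assoc, hR]

theorem eq_of_tripleProd_eq [Mul M] [IsCancelMul M] {p q : M × M × M} (hfst : p.1 = q.1)
    (hthd : p.2.2 = q.2.2) (hprod : tripleProd p = tripleProd q) : p = q := by
  rw [tripleProd, tripleProd, hfst, hthd] at hprod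
  have hsnd : p.2.1 = q.2.1 := mul_left_cancel (mul_right_cancel hprod)
  exact Prod.ext hfst (Prod.ext hsnd hthd)

end TripleProd

/-- A left action `α` and a right action `β` of a monoid on its own underlying set, compatible in
the sense that `α_g(h) β_h(g) = g h`; over a group these are the data from which Lu, Yan and Zhu
construct solutions of the Yang–Baxter equation. As in `YBEform`, the acting element is the first
argument of both `α` and `β`. -/
structure IsCompatibleActionPair {M : Type*} [Monoid M] (α β : M → M → M) : Prop where
  left_one_apply : ∀ h, α 1 h = h
  left_mul_apply : ∀ g g' h, α (g * g') h = α g (α g' h)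
  right_one_apply : ∀ g, β 1 g = g
  right_mul_apply : ∀ h h' g, β (h * h') g = β h' (β h g)
  mul_eq_mul : ∀ g h, α g h * β h g = g * h

namespace IsCompatibleActionPair

section RightCancelMonoid

variable {M : Type*} [RightCancelMonoid M] {α β : M → M → M}

theorem left_map_one (hαβ : IsCompatibleActionPair α β) (g : M) : α g 1 = 1 := by
  have h := hαβ.mul_eq_mul g 1
  rwa [hαβ.right_one_apply, mul_one, mul_eq_right] at h

theorem left_map_mul (hαβ : IsCompatibleActionPair α β) (g h k : M) :
    α g (h * k) = α g h * α (β h g) k := by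
  apply mul_right_cancel (b := β (h * k) g)
  calc
    α g (h * k) * β (h * k) g = g * h * k := by rw [hαβ.mul_eq_mul, mul_assoc]
    _ = α g h * (β h g * k) := by rw [← hαβ.mul_eq_mul g h, mul_assoc]
    _ = α g h * (α (β h g) k * β k (β h g)) := by rw [hαβ.mul_eq_mul]
    _ = α g h * α (β h g) k * β (h * k) g := by rw [hαβ.right_mul_apply, mul_assoc]

end RightCancelMonoid

theorem isBraided {M : Type*} [CancelMonoid M] {α β : M → M → M}
    (hαβ : IsCompatibleActionPair α β) : IsBraided (YBEform α β) := by
  have hR (p : M × M) : (YBEform α β p).1 * (YBEform α β p).2 = p.1 * p.2 :=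
    hαβ.mul_eq_mul p.1 p.2
  funext ⟨x, y, z⟩
  apply eq_of_tripleProd_eq
  · change α (α x y) (α (β y x) z) = α x (α y z)
    rw [← hαβ.left_mul_apply, hαβ.mul_eq_mul, hαβ.left_mul_apply]
  · change β z (β y x) = β (β z y) (β (α y z) x)
    rw [← hαβ.right_mul_apply, ← hαβ.right_mul_apply, hαβ.mul_eq_mul]
  · simp only [Function.comp_apply, tripleProd_Rfst hR, tripleProd_Rsnd hR]

section Group

variable {G : Type*} [Group G] {α β : G → G → G}

theorem left_inv_apply_left (hαβ : IsCompatibleActionPair α β) (g h : G) : α g⁻¹ (α g h) = h := by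
  rw [← hαβ.left_mul_apply, inv_mul_cancel, hαβ.left_one_apply]

theorem right_inv_apply_right (hαβ : IsCompatibleActionPair α β) (h g : G) : β h⁻¹ (β h g) = g := by
  rw [← hαβ.right_mul_apply, mul_inv_cancel, hαβ.right_one_apply]

theorem left_bijective (hαβ : IsCompatibleActionPair α β) (g : G) : Function.Bijective (α g) :=
  Function.bijective_iff_has_inverse.2
    ⟨α g⁻¹, hαβ.left_inv_apply_left g,
      fun h => by simpa only [inv_inv] using hαβ.left_inv_apply_left g⁻¹ h⟩

theorem right_bijective (hαβ : IsCompatibleActionPair α β) (h : G) : Function.Bijective (β h) :=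
  Function.bijective_iff_has_inverse.2
    ⟨β h⁻¹, hαβ.right_inv_apply_right h,
      fun g => by simpa only [inv_inv] using hαβ.right_inv_apply_right h⁻¹ g⟩

theorem YBEform_swapInv_YBEform (hαβ : IsCompatibleActionPair α β) (p : G × G) :
    YBEform α β (swapInv (YBEform α β p)) = swapInv p := by
  obtain ⟨g, h⟩ := p
  have inv_left : (α g h)⁻¹ = α (β h g) h⁻¹ := by
    rw [inv_eq_iff_mul_eq_one, ← hαβ.left_map_mul, mul_inv_cancel, hαβ.left_map_one]
  have hfst : α (β h g)⁻¹ (α g h)⁻¹ = h⁻¹ := by rw [inv_left, hαβ.left_inv_apply_left]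
  have hsnd : β (α g h)⁻¹ (β h g)⁻¹ = g⁻¹ := by
    have hprod := hαβ.mul_eq_mul (β h g)⁻¹ (α g h)⁻¹
    rwa [hfst, ← mul_inv_rev, hαβ.mul_eq_mul, mul_inv_rev, mul_right_inj] at hprod
  exact Prod.ext hfst hsnd

theorem YBEform_bijective (hαβ : IsCompatibleActionPair α β) :
    Function.Bijective (YBEform α β) := by
  have hR := hαβ.YBEform_swapInv_YBEform
  constructor
  · intro p q hpq
    exact swapInv_involutive.injective (by rw [← hR p, hpq, hR q])
  · intro p
    exact ⟨swapInv (YBEform α β (swapInv p)), by rw [hR, swapInv_involutive]⟩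

end Group

end IsCompatibleActionPair

/-- A (not necessarily abelian) 1-cocycle of `G` with values in `A`, where `G` acts on `A`
through `π`. -/
def IsOneCocycle {G A : Type*} [Group G] [Group A] (π : G →* MulAut A) (b : G → A) : Prop :=
  ∀ g h, b (g * h) = b g * π g (b h)

namespace IsOneCocycle

variable {G A : Type*} [Group G] [Group A] {π : G →* MulAut A} {b : G → A}

theorem apply_one (hb : IsOneCocycle π b) : b 1 = 1 := by
  simpa only [mul_one, map_one, MulAut.one_apply, left_eq_mul] using hb 1 1

theorem isCompatibleActionPair (hb : IsOneCocycle π b) (hinj : Function.Injective b)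
    {α : G → G → G} (hα : ∀ g h, b (α g h) = π g (b h)) :
    IsCompatibleActionPair α (fun h g => (α g h)⁻¹ * g * h) := by
  have left_map_one (g : G) : α g 1 = 1 := hinj (by rw [hα, hb.apply_one, map_one])
  have left_map_mul (g h k : G) : α g (h * k) = α g h * α ((α g h)⁻¹ * g * h) k := by
    apply hinj
    calc
      b (α g (h * k)) = π g (b h) * π (g * h) (b k) := by
        rw [hα, hb, map_mul, map_mul, MulAut.mul_apply]
      _ = b (α g h) * π (α g h * ((α g h)⁻¹ * g * h)) (b k) := by
        rw [hα, mul_assoc _ g h, mul_inv_cancel_left]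
      _ = b (α g h * α ((α g h)⁻¹ * g * h) k) := by
        rw [hb, hα _ k, map_mul, MulAut.mul_apply]
  exact
    { left_one_apply := fun h => hinj (by rw [hα, map_one, MulAut.one_apply])
      left_mul_apply := fun g g' h => hinj (by rw [hα, hα, hα, map_mul, MulAut.mul_apply])
      right_one_apply := fun g => by rw [left_map_one, inv_one, one_mul, mul_one]
      right_mul_apply := fun h k g => by rw [left_map_mul]; group
      mul_eq_mul := fun g h => by rw [mul_assoc _ g h, mul_inv_cancel_left] }

end IsOneCocycle

theorem stmt12 {G A : Type*} [Group G] [Group A]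
    (π : G →* MulAut A) (b : G → A) (binv : A → G)
    (hb : ∀ g h : G, b (g * h) = b g * π g (b h))
    (hbinv₁ : Function.LeftInverse binv b)
    (hbinv₂ : Function.RightInverse binv b) :
    (∀ g h : G, g * h = binv (π g (b h)) * ((binv (π g (b h)))⁻¹ * g * h)) ∧
    Function.Bijective (YBEform (fun g h : G => binv (π g (b h)))
      (fun h g : G => (binv (π g (b h)))⁻¹ * g * h)) ∧
    IsBraided (YBEform (fun g h : G => binv (π g (b h)))
      (fun h g : G => (binv (π g (b h)))⁻¹ * g * h)) ∧
    (∀ g : G, Function.Bijective fun h : G => binv (π g (b h))) ∧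
    (∀ h : G, Function.Bijective fun g : G => (binv (π g (b h)))⁻¹ * g * h) := by
  have hαβ := IsOneCocycle.isCompatibleActionPair hb hbinv₁.injective
    (α := fun g h => binv (π g (b h))) fun g h => hbinv₂ (π g (b h))
  exact ⟨fun g h => (hαβ.mul_eq_mul g h).symm, hαβ.YBEform_bijective, hαβ.isBraided,
    hαβ.left_bijective, hαβ.right_bijective⟩
end

section
/- Let X and S be non-degenerate cycle sets, let π be an action of X on S, and let X ⋉_π S be the semidirect product cycle set with associated map R_{X⋉_πS} and structure group G_{R_{X⋉_πS}}. Let π̂ : G_{R_X} → Aut(G_{R_S}) be a group homomorphism with π̂(ι_G x)(ι_G s) = ι_G(π_x(s)) for all x ∈ X and s ∈ S, and form the semidirect product group G_{R_X} ⋉_{π̂} G_{R_S} (with multiplication (g,h)(g',h') = (gg', h·π̂(g)(h'))). Then there exists a group homomorphism Π : G_{R_{X⋉_πS}} → G_{R_X} ⋉_{π̂} G_{R_S} with Π(ι_G(x,s)) = (ι_G x, ι_G s) for all x ∈ X and s ∈ S. -/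
/-- The defining relators of the structure group of `R(x,y) = (α_x(y), β_y(x))`:
`x * y = α_x(y) * β_y(x)`. -/
def ybRels {X : Type*} (α β : X → X → X) : Set (FreeGroup X) :=
  {r | ∃ x y : X, r = FreeGroup.of x * FreeGroup.of y *
        (FreeGroup.of (α x y) * FreeGroup.of (β y x))⁻¹}

/-- The structure group `G_R` of the solution `R(x,y) = (α_x(y), β_y(x))`. -/
abbrev StructureGroup {X : Type*} (α β : X → X → X) : Type _ :=
  PresentedGroup (ybRels α β)

/-- The semidirect product operation on `X × S`:
`(x,s)·(y,t) = (x·y, π_{x·y}(s)·π_{y·x}(t))`. -/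
def sdOp {X S : Type*} (cX : X → X → X) (cS : S → S → S) (p : X → S → S) :
    X × S → X × S → X × S :=
  fun q r => (cX q.1 r.1, cS (p (cX q.1 r.1) q.2) (p (cX r.1 q.1) r.2))

/-!
Substituting `x · y` and `x` for the two generators turns the relations of the structure group of
a cycle set into `(x · y) x = (y · x) y`. In the semidirect product of the structure groups `G_X`
and `G_S`, the left-hand side for a pair `(x, s)`, `(y, t)` has `G_X`-component `(x · y) x`, and,
since `x · y` acts on `s` as `π_{x·y}`, it has `G_S`-component `(u · v) u` with `u = π_{x·y}(s)`
and `v = π_{y·x}(t)`. Exchanging the two pairs exchanges `u` and `v`, so both components are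
symmetric by the relations of `G_X` and `G_S`.
-/

namespace StructureGroup

variable {X G : Type*} [Group G] {α β : X → X → X}

theorem of_mul_of (x y : X) :
    (PresentedGroup.of x * PresentedGroup.of y : StructureGroup α β) =
      PresentedGroup.of (α x y) * PresentedGroup.of (β y x) :=
  PresentedGroup.mk_eq_mk_of_mul_inv_mem ⟨x, y, rfl⟩

/-- The universal property of the structure group: a map on generators that respects the
relations `x * y = α_x(y) * β_y(x)` extends to a group homomorphism. -/
def lift (f : X → G) (hf : ∀ x y, f x * f y = f (α x y) * f (β y x)) :
    StructureGroup α β →* G :=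
  PresentedGroup.toGroup (f := f) <| by
    rintro _ ⟨x, y, rfl⟩
    simp only [map_mul, map_inv, FreeGroup.lift_apply_of, mul_inv_eq_one, hf x y]

theorem lift_of (f : X → G) (hf : ∀ x y, f x * f y = f (α x y) * f (β y x)) (x : X) :
    lift f hf (PresentedGroup.of x) = f x :=
  PresentedGroup.toGroup.of _

end StructureGroup

/-- The inverse-free form of the relations of the structure group of a cycle set: a map `f`
from a set with operation `c`, written `x · y`, satisfies `f (x · y) * f x = f (y · x) * f y`.
When the left multiplications of `c` are invertible, these are the maps that extend to
homomorphisms on the structure group. -/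
def IsStructureMap {X G : Type*} [Mul G] (c : X → X → X) (f : X → G) : Prop :=
  ∀ x y, f (c x y) * f x = f (c y x) * f y

theorem StructureGroup.isStructureMap_of {X : Type*} {c cinv : X → X → X}
    (hc : ∀ x, Function.LeftInverse (cinv x) (c x)) :
    IsStructureMap c
      (PresentedGroup.of : X → StructureGroup (fun x y => c (cinv y x) y) cinv) := by
  intro x y
  have relation := of_mul_of (α := fun x y => c (cinv y x) y) (β := cinv) (c x y) x
  simpa only [hc x y] using relation

namespace IsStructureMap

theorem mul_eq_mul {X G : Type*} [Mul G] {c cinv : X → X → X} {f : X → G}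
    (hf : IsStructureMap c f) (hc : ∀ x, Function.RightInverse (cinv x) (c x)) (x y : X) :
    f x * f y = f (c (cinv y x) y) * f (cinv y x) := by
  simpa only [hc y x] using hf y (cinv y x)

theorem semidirectProduct {X S G N : Type*} [Group G] [Group N] {φ : G →* MulAut N}
    {cX : X → X → X} {cS : S → S → S} {p : X → S → S} {f : X → G} {g : S → N}
    (hf : IsStructureMap cX f) (hg : IsStructureMap cS g)
    (hφ : ∀ x s, φ (f x) (g s) = g (p x s)) :
    IsStructureMap (sdOp cX cS p) fun q =>
      (SemidirectProduct.inl (g q.2) * SemidirectProduct.inr (f q.1) : N ⋊[φ] G) := by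
  have mul_expand (q r : X × S) :
      (SemidirectProduct.inl (g r.2) * SemidirectProduct.inr (f r.1) : N ⋊[φ] G) *
          (SemidirectProduct.inl (g q.2) * SemidirectProduct.inr (f q.1)) =
        ⟨g r.2 * g (p r.1 q.2), f r.1 * f q.1⟩ := by
    ext <;> simp [hφ]
  rintro ⟨x, s⟩ ⟨y, t⟩
  rw [mul_expand, mul_expand]
  exact SemidirectProduct.ext (hg (p (cX x y) s) (p (cX y x) t)) (hf x y)

end IsStructureMap

theorem stmt19_general {X S : Type*} (cX cXinv : X → X → X) (cS cSinv : S → S → S)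
    (p : X → S → S) (minv : X × S → X × S → X × S)
    (hXinv : ∀ x, Function.LeftInverse (cXinv x) (cX x))
    (hSinv : ∀ s, Function.LeftInverse (cSinv s) (cS s))
    (hminv : ∀ q : X × S, Function.RightInverse (minv q) (sdOp cX cS p q))
    (πhat : StructureGroup (fun x y => cX (cXinv y x) y) cXinv →*
      MulAut (StructureGroup (fun s t => cS (cSinv t s) t) cSinv))
    (hπhat : ∀ (x : X) (s : S),
      πhat (PresentedGroup.of x) (PresentedGroup.of s) =
        PresentedGroup.of (p x s)) :
    ∃ Pihom : StructureGroup (fun q r : X × S => sdOp cX cS p (minv r q) r)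
        (fun r q : X × S => minv r q) →*
        SemidirectProduct (StructureGroup (fun s t => cS (cSinv t s) t) cSinv)
          (StructureGroup (fun x y => cX (cXinv y x) y) cXinv) πhat,
      ∀ (x : X) (s : S),
        Pihom (PresentedGroup.of (x, s)) =
          SemidirectProduct.inl (PresentedGroup.of s) *
            SemidirectProduct.inr (PresentedGroup.of x) := by
  have structureMap := (StructureGroup.isStructureMap_of hXinv).semidirectProduct
    (StructureGroup.isStructureMap_of hSinv) hπhat
  exact ⟨StructureGroup.lift _ (structureMap.mul_eq_mul hminv),
    fun x s => StructureGroup.lift_of _ _ (x, s)⟩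

theorem stmt19 {X S : Type*} (cX cXinv : X → X → X) (cS cSinv : S → S → S)
    (p : X → S → S) (minv : X × S → X × S → X × S)
    (hXbij : ∀ x, Function.Bijective (cX x))
    (hXinv : ∀ x, Function.LeftInverse (cXinv x) (cX x) ∧
      Function.RightInverse (cXinv x) (cX x))
    (hXcycle : ∀ x y z, cX (cX x y) (cX x z) = cX (cX y x) (cX y z))
    (hXnd : Function.Bijective fun x : X => cX x x)
    (hSbij : ∀ s, Function.Bijective (cS s))
    (hSinv : ∀ s, Function.LeftInverse (cSinv s) (cS s) ∧
      Function.RightInverse (cSinv s) (cS s))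
    (hScycle : ∀ s t u, cS (cS s t) (cS s u) = cS (cS t s) (cS t u))
    (hSnd : Function.Bijective fun s : S => cS s s)
    (hpbij : ∀ x, Function.Bijective (p x))
    (hpmor : ∀ x s t, p x (cS s t) = cS (p x s) (p x t))
    (hpact : ∀ x y s, p (cX y x) (p y s) = p (cX x y) (p x s))
    (hminv : ∀ q : X × S, Function.LeftInverse (minv q) (sdOp cX cS p q) ∧
      Function.RightInverse (minv q) (sdOp cX cS p q))
    (πhat : StructureGroup (fun x y => cX (cXinv y x) y) cXinv →*
      MulAut (StructureGroup (fun s t => cS (cSinv t s) t) cSinv))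
    (hπhat : ∀ (x : X) (s : S),
      πhat (PresentedGroup.of x) (PresentedGroup.of s) =
        PresentedGroup.of (p x s)) :
    ∃ Pihom : StructureGroup (fun q r : X × S => sdOp cX cS p (minv r q) r)
        (fun r q : X × S => minv r q) →*
        SemidirectProduct (StructureGroup (fun s t => cS (cSinv t s) t) cSinv)
          (StructureGroup (fun x y => cX (cXinv y x) y) cXinv) πhat,
      ∀ (x : X) (s : S),
        Pihom (PresentedGroup.of (x, s)) =
          SemidirectProduct.inl (PresentedGroup.of s) *
            SemidirectProduct.inr (PresentedGroup.of x) :=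
  stmt19_general cX cXinv cS cSinv p minv (fun x => (hXinv x).1) (fun s => (hSinv s).1)
    (fun q => (hminv q).2) πhat hπhat
end
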